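/- Let n ≥ 2, ε_b > 0, and let S_P, S_K ∈ {0,1}^{n×n} be adjacency matrices such that the plant graph G_P has no isolated node, contains at least one sink (sinks being exactly the nodes n−c+1,…,n for some c ≥ 1), and S_K ⊇ S_P entrywise with ones on the diagonal. Then the control design strategy Γ^Θ is undominated in the set 𝒞 of limited-model-information control design strategies with totally disconnected design graph: there is no Γ ∈ 𝒞 with J_P(Γ(A,B,D)) ≤ J_P(Γ^Θ(A,B,D)) for every admissible plant P = (A,B,D,x0,w0) and strict inequality for at least one such plant. -/

import Mathlib

open Matrix
open scoped ENNReal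

/-- State trajectory of the plant `x(k+1) = A x(k) + B (u(k) + w(k))`, `w(k) = D^k w0`. -/
noncomputable def xTraj {n : ℕ} (A B D : Matrix (Fin n) (Fin n) ℝ)
    (x0 w0 : Fin n → ℝ) (u : ℕ → Fin n → ℝ) : ℕ → (Fin n → ℝ)
  | 0 => x0
  | k + 1 => A.mulVec (xTraj A B D x0 w0 u k) + B.mulVec (u k + (D ^ k).mulVec w0)

/-- Cost of a control sequence. -/
noncomputable def cost {n : ℕ} (A B D : Matrix (Fin n) (Fin n) ℝ)
    (x0 w0 : Fin n → ℝ) (u : ℕ → Fin n → ℝ) : ℝ≥0∞ :=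
  ∑' k : ℕ, ENNReal.ofReal ((∑ i, (xTraj A B D x0 w0 u k i) ^ 2)
    + ∑ i, (u k i + (D ^ k).mulVec w0 i) ^ 2)

/-- A dynamic state-feedback controller. -/
structure Ctrl (n : ℕ) : Type 1 where
  σ : Type
  fin : Fintype σ
  dec : DecidableEq σ
  AK : Matrix σ σ ℝ
  BK : Matrix σ (Fin n) ℝ
  CK : Matrix (Fin n) σ ℝ
  DK : Matrix (Fin n) (Fin n) ℝ

/-- Closed-loop state `(x(k), x_K(k))`. -/
noncomputable def clState {n : ℕ} (K : Ctrl n) (A B D : Matrix (Fin n) (Fin n) ℝ)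
    (x0 w0 : Fin n → ℝ) : ℕ → (Fin n → ℝ) × (K.σ → ℝ)
  | 0 => (x0, 0)
  | k + 1 =>
      letI := K.fin
      (A.mulVec (clState K A B D x0 w0 k).1
          + B.mulVec ((K.CK.mulVec (clState K A B D x0 w0 k).2
              + K.DK.mulVec (clState K A B D x0 w0 k).1) + (D ^ k).mulVec w0),
       K.AK.mulVec (clState K A B D x0 w0 k).2 + K.BK.mulVec (clState K A B D x0 w0 k).1)

/-- Control sequence generated by the controller in closed loop. -/
noncomputable def ctrlU {n : ℕ} (K : Ctrl n) (A B D : Matrix (Fin n) (Fin n) ℝ)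
    (x0 w0 : Fin n → ℝ) (k : ℕ) : Fin n → ℝ :=
  letI := K.fin
  K.CK.mulVec (clState K A B D x0 w0 k).2 + K.DK.mulVec (clState K A B D x0 w0 k).1

/-- Closed-loop cost `J_P(K)`. -/
noncomputable def Jcost {n : ℕ} (K : Ctrl n) (A B D : Matrix (Fin n) (Fin n) ℝ)
    (x0 w0 : Fin n → ℝ) : ℝ≥0∞ :=
  cost A B D x0 w0 (ctrlU K A B D x0 w0)

/-- Membership in the structured controller class `𝒦(S_K)`. -/
def memK {n : ℕ} (SK : Fin n → Fin n → Bool) (K : Ctrl n) : Prop :=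
  letI := K.fin
  letI := K.dec
  ∀ i j, SK i j = false → K.DK i j = 0 ∧ ∀ t : ℕ, (K.CK * K.AK ^ t * K.BK) i j = 0

/-- A subcontroller (one block of a limited model information controller). -/
structure SubCtrl (n : ℕ) : Type 1 where
  σ : Type
  fin : Fintype σ
  dec : DecidableEq σ
  AK : Matrix σ σ ℝ
  BK : Matrix σ (Fin n) ℝ
  CK : σ → ℝ
  DK : Fin n → ℝ

/-- Assembling `n` subcontrollers into one controller with block-diagonal `A_K` and `C_K`. -/
noncomputable def assemble {n : ℕ} (γ : Fin n → SubCtrl n) : Ctrl n where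
  σ := Σ i : Fin n, (γ i).σ
  fin := letI : ∀ i, Fintype (γ i).σ := fun i => (γ i).fin; inferInstance
  dec := letI : ∀ i, DecidableEq (γ i).σ := fun i => (γ i).dec; inferInstance
  AK := Matrix.blockDiagonal' (fun i => (γ i).AK)
  BK := fun p j => (γ p.1).BK p.2 j
  CK := fun i q => if q.1 = i then (γ q.1).CK q.2 else 0
  DK := fun i j => (γ i).DK j

/-- A limited model information control design strategy with totally disconnected design
graph: subcontroller `i` is a function of the `i`-th row of `A`, `b_ii` and `d_ii` only. -/
def Strat (n : ℕ) : Type 1 := Fin n → (Fin n → ℝ) → ℝ → ℝ → SubCtrl n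

/-- The controller a strategy produces for the plant `(A, B, D)`. -/
noncomputable def applyStrat {n : ℕ} (Γ : Strat n) (A B D : Matrix (Fin n) (Fin n) ℝ) :
    Ctrl n :=
  assemble (fun i => Γ i (A i) (B i i) (D i i))

/-- Admissible plant data: `A ∈ 𝒜(S_P)`, `B` diagonal with `|b_ii| ≥ ε_b`, `D` diagonal. -/
def Adm {n : ℕ} (SP : Fin n → Fin n → Bool) (εb : ℝ)
    (A B D : Matrix (Fin n) (Fin n) ℝ) : Prop :=
  (∀ i j, SP i j = false → A i j = 0) ∧ B.IsDiag ∧ (∀ i, εb ≤ |B i i|) ∧ D.IsDiag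

/-- The deadbeat subcontroller for subsystem `i`. -/
noncomputable def dbSub {n : ℕ} (i : Fin n) (Ai : Fin n → ℝ) (bii dii : ℝ) : SubCtrl n where
  σ := Fin 1
  fin := inferInstance
  dec := inferInstance
  AK := fun _ _ => dii
  BK := fun _ j => -(bii⁻¹ * dii ^ 2) * (if j = i then 1 else 0)
  CK := fun _ => 1
  DK := fun j => -bii⁻¹ * (Ai j + (if j = i then dii else 0))

/-- The deadbeat control design strategy `Γ^Δ`. -/
noncomputable def dbStrat (n : ℕ) : Strat n := fun i Ai bii dii => dbSub i Ai bii dii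

/-- The control design strategy `Γ^Θ` of (26): deadbeat on every non-sink node and, on each
sink node `i` (the last `c` nodes), the optimal scalar gain
`f_i = 2/(b_ii² + a_ii² + 1 + √((a_ii² + b_ii²)² + 2(b_ii² − a_ii²) + 1))`. -/
noncomputable def thetaStrat (n c : ℕ) : Strat n := fun i Ai bii dii =>
  { σ := Fin 1
    fin := inferInstance
    dec := inferInstance
    AK := fun _ _ => dii
    BK := fun _ j => bii⁻¹ * dii * (if n - c ≤ (i : ℕ) then
        2 / (bii ^ 2 + (Ai i) ^ 2 + 1 +
          Real.sqrt (((Ai i) ^ 2 + bii ^ 2) ^ 2 + 2 * (bii ^ 2 - (Ai i) ^ 2) + 1)) else 0)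
        * Ai j - bii⁻¹ * dii ^ 2 * (if j = i then 1 else 0)
    CK := fun _ => 1
    DK := fun j => bii⁻¹ * ((if n - c ≤ (i : ℕ) then
        2 / (bii ^ 2 + (Ai i) ^ 2 + 1 +
          Real.sqrt (((Ai i) ^ 2 + bii ^ 2) ^ 2 + 2 * (bii ^ 2 - (Ai i) ^ 2) + 1)) else 0) - 1)
        * Ai j - bii⁻¹ * dii * (if j = i then 1 else 0) }

/-- State of a subcontroller driven by the signal `x`. -/
noncomputable def subState {n : ℕ} (γ : SubCtrl n) (x : ℕ → Fin n → ℝ) : ℕ → (γ.σ → ℝ)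
  | 0 => 0
  | k + 1 => letI := γ.fin; γ.AK.mulVec (subState γ x k) + γ.BK.mulVec (x k)

/-- Output of a subcontroller driven by the signal `x`. -/
noncomputable def subOut {n : ℕ} (γ : SubCtrl n) (x : ℕ → Fin n → ℝ) (k : ℕ) : ℝ :=
  letI := γ.fin; γ.CK ⬝ᵥ subState γ x k + γ.DK ⬝ᵥ x k

lemma subState_sub {n : ℕ} (γ : SubCtrl n) (x y : ℕ → Fin n → ℝ) (k : ℕ) :
    subState γ (x - y) k = subState γ x k - subState γ y k := by
  let _ := γ.fin
  induction k with
  | zero => simp [subState]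
  | succ k ih =>
    simp only [subState, ih, Pi.sub_apply, Matrix.mulVec_sub]
    abel

lemma subOut_sub {n : ℕ} (γ : SubCtrl n) (x y : ℕ → Fin n → ℝ) (k : ℕ) :
    subOut γ (x - y) k = subOut γ x k - subOut γ y k := by
  let _ := γ.fin
  simp only [subOut, subState_sub, Pi.sub_apply, dotProduct_sub]
  ring

lemma subState_shift {n : ℕ} (γ : SubCtrl n) (x : ℕ → Fin n → ℝ) (h0 : x 0 = 0) (k : ℕ) :
    subState γ x (k + 1) = subState γ (fun t => x (t + 1)) k := by
  let _ := γ.fin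
  induction k with
  | zero => simp [subState, h0]
  | succ k ih =>
    rw [subState, ih]
    simp [subState]

lemma subOut_shift {n : ℕ} (γ : SubCtrl n) (x : ℕ → Fin n → ℝ) (h0 : x 0 = 0) (k : ℕ) :
    subOut γ x (k + 1) = subOut γ (fun t => x (t + 1)) k := by
  simp [subOut, subState_shift γ x h0]

/-- If two subcontrollers agree at all times `< k`, their difference at time `k` depends only
on the initial value of the driving signal. -/
lemma subOut_diff {n : ℕ} (γ η : SubCtrl n) (k : ℕ)
    (h : ∀ t, t < k → ∀ x, subOut γ x t = subOut η x t)
    (x y : ℕ → Fin n → ℝ) (h0 : x 0 = y 0) :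
    subOut γ x k - subOut η x k = subOut γ y k - subOut η y k := by
  have h1 : subOut γ (x - y) k = subOut η (x - y) k := by
    have hz : (x - y) 0 = 0 := by simp [h0]
    cases k with
    | zero => simp [subOut, subState, h0]
    | succ k => rw [subOut_shift _ _ hz, subOut_shift _ _ hz]; exact h k (Nat.lt_succ_self k) _
  rw [subOut_sub, subOut_sub] at h1
  linarith

lemma assemble_state {n : ℕ} (γ : Fin n → SubCtrl n) (A B D : Matrix (Fin n) (Fin n) ℝ)
    (x0 w0 : Fin n → ℝ) (k : ℕ) (i : Fin n) (s : (γ i).σ) :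
    (clState (assemble γ) A B D x0 w0 k).2 ⟨i, s⟩
      = subState (γ i) (fun t => (clState (assemble γ) A B D x0 w0 t).1) k s := by
  let _ : ∀ i, Fintype (γ i).σ := fun i => (γ i).fin
  induction k generalizing i s with
  | zero => rfl
  | succ k ih =>
    rw [clState, subState]
    refine congrArg₂ (fun a b : ℝ => a + b) ?_ rfl
    change ∑ q : (Σ i, (γ i).σ), Matrix.blockDiagonal' (fun i => (γ i).AK) ⟨i, s⟩ q * _ = _
    rw [Fintype.sum_sigma, Finset.sum_eq_single i]
    · simp only [Matrix.blockDiagonal'_apply_eq, ih]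
      rfl
    · intro j _ hj
      apply Finset.sum_eq_zero
      intro t _
      rw [Matrix.blockDiagonal'_apply_ne _ _ _ (Ne.symm hj), zero_mul]
    · simp

lemma assemble_out {n : ℕ} (γ : Fin n → SubCtrl n) (A B D : Matrix (Fin n) (Fin n) ℝ)
    (x0 w0 : Fin n → ℝ) (k : ℕ) (i : Fin n) :
    ctrlU (assemble γ) A B D x0 w0 k i
      = subOut (γ i) (fun t => (clState (assemble γ) A B D x0 w0 t).1) k := by
  let _ : ∀ i, Fintype (γ i).σ := fun i => (γ i).fin
  rw [ctrlU, subOut]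
  refine congrArg₂ (fun a b : ℝ => a + b) ?_ rfl
  change ∑ q : (Σ i, (γ i).σ), (if q.1 = i then (γ q.1).CK q.2 else 0) * _ = _
  rw [Fintype.sum_sigma, Finset.sum_eq_single i]
  · simp only [if_true, assemble_state]
    rfl
  · intro j _ hj
    simp [hj]
  · simp

lemma xTraj_cl {n : ℕ} (K : Ctrl n) (A B D : Matrix (Fin n) (Fin n) ℝ)
    (x0 w0 : Fin n → ℝ) (k : ℕ) :
    xTraj A B D x0 w0 (ctrlU K A B D x0 w0) k = (clState K A B D x0 w0 k).1 := by
  induction k with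
  | zero => simp [xTraj, clState]
  | succ k ih => rw [xTraj, ih, clState]; rfl

lemma diag_mulVec {n : ℕ} (B : Matrix (Fin n) (Fin n) ℝ) (hB : B.IsDiag) (v : Fin n → ℝ)
    (i : Fin n) : B.mulVec v i = B i i * v i := by
  rw [← hB.diagonal_diag, Matrix.mulVec_diagonal]
  simp

lemma diag_pow_mulVec {n : ℕ} (B : Matrix (Fin n) (Fin n) ℝ) (hB : B.IsDiag) (v : Fin n → ℝ)
    (k : ℕ) (i : Fin n) : (B ^ k).mulVec v i = B i i ^ k * v i := by
  rw [← hB.diagonal_diag, Matrix.diagonal_pow, Matrix.mulVec_diagonal]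
  simp

/-- Trajectory description of the closed loop. -/
lemma traj {n : ℕ} (Γ : Strat n) (SP : Fin n → Fin n → Bool) (εb : ℝ)
    (A B D : Matrix (Fin n) (Fin n) ℝ) (hadm : Adm SP εb A B D) (x0 w0 : Fin n → ℝ) :
    ∃ X V : ℕ → Fin n → ℝ, X 0 = x0 ∧
      (∀ k i, X (k + 1) i = A i ⬝ᵥ X k + B i i * V k i) ∧
      (∀ k i, V k i = subOut (Γ i (A i) (B i i) (D i i)) X k + D i i ^ k * w0 i) ∧
      Jcost (applyStrat Γ A B D) A B D x0 w0
        = ∑ i, ∑' k, ENNReal.ofReal (X k i ^ 2 + V k i ^ 2) := by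
  obtain ⟨_, hB, _, hD⟩ := hadm
  refine ⟨fun t => (clState (applyStrat Γ A B D) A B D x0 w0 t).1,
    fun k i => ctrlU (applyStrat Γ A B D) A B D x0 w0 k i + D i i ^ k * w0 i, rfl, ?_, ?_, ?_⟩
  · intro k i
    beta_reduce
    rw [← diag_pow_mulVec D hD, ← Pi.add_apply, ← diag_mulVec B hB, clState]
    rfl
  · intro k i
    simp only [applyStrat, assemble_out]
  · rw [Jcost, cost, ← Summable.tsum_finsetSum (fun _ _ => ENNReal.summable)]
    congr 1
    ext k
    rw [xTraj_cl, ← Finset.sum_add_distrib, ENNReal.ofReal_sum_of_nonneg]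
    · simp only [diag_pow_mulVec D hD]
    · intro i _; positivity

lemma bellman_lower (s W : ℕ → ℝ) (C : ℝ) (hs : ∀ k, 0 ≤ s k)
    (hW : ∀ k, W k ≤ s k + W (k + 1)) (hC : ∀ k, W (k + 1) ≤ s (k + 1) + C * s (k + 2)) :
    ENNReal.ofReal (W 0) ≤ ∑' k, ENNReal.ofReal (s k) := by
  by_cases htop : ∑' k, ENNReal.ofReal (s k) = ⊤
  · rw [htop]; exact le_top
  have hsum : Summable s := by
    have := ENNReal.summable_toReal htop
    simpa [ENNReal.toReal_ofReal, hs] using this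
  rw [← ENNReal.ofReal_tsum_of_nonneg hs hsum]
  apply ENNReal.ofReal_le_ofReal
  have h1 : ∀ N, W 0 ≤ ∑ k ∈ Finset.range N, s k + W N := by
    intro N
    induction N with
    | zero => simp
    | succ N ih => rw [Finset.sum_range_succ]; linarith [hW N]
  have h0 := hsum.tendsto_atTop_zero
  have h2 : Filter.Tendsto
      (fun N => ∑ k ∈ Finset.range (N + 1), s k + (s (N + 1) + C * s (N + 2)))
      Filter.atTop (nhds (∑' k, s k + (0 + C * 0))) := by
    refine ((Filter.tendsto_add_atTop_iff_nat 1).2 hsum.hasSum.tendsto_sum_nat).add ?_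
    exact ((Filter.tendsto_add_atTop_iff_nat 1).2 h0).add
      (((Filter.tendsto_add_atTop_iff_nat 2).2 h0).const_mul C)
  have h3 := ge_of_tendsto' (b := W 0) h2 (fun N => by linarith [h1 (N + 1), hC N])
  linarith

lemma bellman_upper (s W : ℕ → ℝ) (hs : ∀ k, 0 ≤ s k) (hW0 : ∀ k, 0 ≤ W k)
    (hW : ∀ k, s k + W (k + 1) ≤ W k) :
    ∑' k, ENNReal.ofReal (s k) ≤ ENNReal.ofReal (W 0) := by
  rw [ENNReal.tsum_eq_iSup_nat]
  apply iSup_le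
  intro N
  rw [← ENNReal.ofReal_sum_of_nonneg (fun i _ => hs i)]
  apply ENNReal.ofReal_le_ofReal
  have h1 : ∑ k ∈ Finset.range N, s k + W N ≤ W 0 := by
    induction N with
    | zero => simp
    | succ N ih => rw [Finset.sum_range_succ]; linarith [hW N]
  linarith [hW0 N]

lemma quad_id (b p f z v : ℝ) (hf : f * (1 + b ^ 2 * p) = 1) :
    v ^ 2 + p * (z + b * v) ^ 2
      = p * f * z ^ 2 + (1 + b ^ 2 * p) * (v + b * p * f * z) ^ 2 := by
  linear_combination (-(2 * v * z * b * p + p * z ^ 2 * (1 + b ^ 2 * p * f))) * hf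

lemma sink_lower (a b p f : ℝ) (hp : 0 ≤ p) (hf : f * (1 + b ^ 2 * p) = 1)
    (hd : p = 1 + a ^ 2 * p * f) (x v g : ℕ → ℝ)
    (h : ∀ k, x (k + 1) = a * x k + g k + b * v k) (hg : ∀ k, g (k + 2) = 0) :
    ENNReal.ofReal (x 0 ^ 2 + v 0 ^ 2 + x 1 ^ 2 + p * f * (a * x 1 + g 1) ^ 2)
      ≤ ∑' k, ENNReal.ofReal (x k ^ 2 + v k ^ 2) := by
  refine bellman_lower (fun k => x k ^ 2 + v k ^ 2)
    (fun k => x k ^ 2 + v k ^ 2 + x (k + 1) ^ 2 + p * f * (a * x (k + 1) + g (k + 1)) ^ 2) p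
    (fun k => by positivity) ?_ ?_
  · intro k
    have h1 := quad_id b p f (a * x (k + 1) + g (k + 1)) (v (k + 1)) hf
    rw [← h (k + 1)] at h1
    have h2 : 0 ≤ (1 + b ^ 2 * p) * (v (k + 1) + b * p * f * (a * x (k + 1) + g (k + 1))) ^ 2 := by
      positivity
    have h3 : p * x (k + 2) ^ 2 = x (k + 2) ^ 2 + p * f * (a * x (k + 2)) ^ 2 := by
      linear_combination x (k + 2) ^ 2 * hd
    simp only [add_assoc, Nat.reduceAdd] at *
    rw [hg k, add_zero]
    linarith
  · intro k
    simp only [add_assoc, Nat.reduceAdd] at *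
    rw [hg k, add_zero]
    have h3 : p * x (k + 2) ^ 2 = x (k + 2) ^ 2 + p * f * (a * x (k + 2)) ^ 2 := by
      linear_combination x (k + 2) ^ 2 * hd
    have h4 : 0 ≤ p * v (k + 2) ^ 2 := by positivity
    linarith

lemma sink_upper (a b p f : ℝ) (hp : 0 ≤ p) (hf0 : 0 ≤ f) (hf : f * (1 + b ^ 2 * p) = 1)
    (hd : p = 1 + a ^ 2 * p * f) (x v g : ℕ → ℝ)
    (h : ∀ k, x (k + 1) = a * x k + g k + b * v k) (hg : ∀ k, g (k + 2) = 0)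
    (hv : ∀ k, v (k + 1) = - (b * p * f * (a * x (k + 1) + g (k + 1)))) :
    ∑' k, ENNReal.ofReal (x k ^ 2 + v k ^ 2) ≤
    ENNReal.ofReal (x 0 ^ 2 + v 0 ^ 2 + x 1 ^ 2 + p * f * (a * x 1 + g 1) ^ 2) := by
  refine bellman_upper (fun k => x k ^ 2 + v k ^ 2)
    (fun k => x k ^ 2 + v k ^ 2 + x (k + 1) ^ 2 + p * f * (a * x (k + 1) + g (k + 1)) ^ 2)
    (fun k => by positivity) (fun k => by positivity) ?_
  · intro k
    have h1 := quad_id b p f (a * x (k + 1) + g (k + 1)) (v (k + 1)) hf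
    rw [← h (k + 1)] at h1
    have h2 : v (k + 1) + b * p * f * (a * x (k + 1) + g (k + 1)) = 0 := by
      rw [hv]; ring
    rw [h2] at h1
    have h3 : p * x (k + 2) ^ 2 = x (k + 2) ^ 2 + p * f * (a * x (k + 2)) ^ 2 := by
      linear_combination x (k + 2) ^ 2 * hd
    simp only [add_assoc, Nat.reduceAdd] at *
    rw [hg k, add_zero]
    linarith

/-- The gain used by `Γ^Θ`. -/
noncomputable def fg {n : ℕ} (c : ℕ) (i : Fin n) (a b : ℝ) : ℝ :=
  if n - c ≤ (i : ℕ) then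
    2 / (b ^ 2 + a ^ 2 + 1 + Real.sqrt ((a ^ 2 + b ^ 2) ^ 2 + 2 * (b ^ 2 - a ^ 2) + 1)) else 0

lemma fg_dare {n : ℕ} (c : ℕ) (i : Fin n) (hi : n - c ≤ (i : ℕ)) (a b : ℝ) (hb : b ≠ 0) :
    0 ≤ fg c i a b ∧ ∃ p : ℝ, 0 ≤ p ∧ fg c i a b * (1 + b ^ 2 * p) = 1 ∧
      p = 1 + a ^ 2 * p * fg c i a b := by
  rw [fg, if_pos hi]
  set S := Real.sqrt ((a ^ 2 + b ^ 2) ^ 2 + 2 * (b ^ 2 - a ^ 2) + 1) with hS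
  have hS0 : 0 ≤ S := Real.sqrt_nonneg _
  have hb2 : 0 < b ^ 2 := by positivity
  have hSq : S ^ 2 = (a ^ 2 + b ^ 2 - 1) ^ 2 + 4 * b ^ 2 := by
    rw [hS, Real.sq_sqrt]
    · ring
    · nlinarith [sq_nonneg (a ^ 2 + b ^ 2 - 1)]
  have hge : 0 ≤ a ^ 2 + b ^ 2 - 1 + S := by
    nlinarith [abs_le_of_sq_le_sq (a := a ^ 2 + b ^ 2 - 1) (b := S) (by nlinarith) hS0]
  have hpos : 0 < b ^ 2 + a ^ 2 + 1 + S := by positivity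
  refine ⟨by positivity, (a ^ 2 + b ^ 2 - 1 + S) / (2 * b ^ 2), by positivity, ?_, ?_⟩
  · field_simp
    ring
  · field_simp
    linear_combination hSq

lemma fg_bound {n : ℕ} (c : ℕ) (i : Fin n) (b : ℝ) :
    0 ≤ fg c i 0 b ∧ fg c i 0 b * (1 + b ^ 2) ≤ 2 := by
  rw [fg]
  split_ifs
  · have := Real.sqrt_nonneg (((0:ℝ) ^ 2 + b ^ 2) ^ 2 + 2 * (b ^ 2 - 0 ^ 2) + 1)
    refine ⟨by positivity, ?_⟩
    rw [div_mul_eq_mul_div, div_le_iff₀ (by positivity)]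
    nlinarith
  · simp

/-- Behaviour of a node controlled by `Γ^Θ`. -/
lemma theta_step {n : ℕ} (c : ℕ) (i : Fin n) (Ai : Fin n → ℝ) (b d w : ℝ) (hb : b ≠ 0)
    (x : ℕ → Fin n → ℝ) (N : ℕ)
    (h : ∀ k, k < N → x (k + 1) i
      = Ai ⬝ᵥ x k + b * (subOut (thetaStrat n c i Ai b d) x k + d ^ k * w)) :
    ∀ k, k ≤ N → Ai ⬝ᵥ x k + b * (subOut (thetaStrat n c i Ai b d) x k + d ^ k * w)
      = fg c i (Ai i) b * (Ai ⬝ᵥ x k) + if k = 0 then b * w - d * x 0 i else 0 := by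
  set γ := thetaStrat n c i Ai b d with hγ
  let s : ℕ → ℝ := fun k => subState γ x k (0 : Fin 1)
  have hs0 : s 0 = 0 := rfl
  have hs : ∀ k, s (k + 1) = d * s k + b⁻¹ * d * fg c i (Ai i) b * (Ai ⬝ᵥ x k)
      - b⁻¹ * d ^ 2 * x k i := by
    intro k
    have e1 : s (k + 1) = (∑ t : Fin 1, d * subState γ x k t)
      + ∑ j, (b⁻¹ * d * fg c i (Ai i) b * Ai j - b⁻¹ * d ^ 2 * (if j = i then 1 else 0))
          * x k j := rfl
    rw [e1, Fin.sum_univ_one]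
    simp only [sub_mul, Finset.sum_sub_distrib, mul_assoc, ite_mul, one_mul, zero_mul, mul_ite,
      mul_zero, Finset.sum_ite_eq', Finset.mem_univ, if_true, dotProduct, ← Finset.mul_sum]
    change d * s k + _ = _
    ring
  have ho : ∀ k, subOut γ x k = s k + b⁻¹ * (fg c i (Ai i) b - 1) * (Ai ⬝ᵥ x k)
      - b⁻¹ * d * x k i := by
    intro k
    have e1 : subOut γ x k = (∑ t : Fin 1, 1 * subState γ x k t)
      + ∑ j, (b⁻¹ * (fg c i (Ai i) b - 1) * Ai j - b⁻¹ * d * (if j = i then 1 else 0))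
          * x k j := rfl
    rw [e1, Fin.sum_univ_one]
    simp only [sub_mul, Finset.sum_sub_distrib, mul_assoc, ite_mul, one_mul, zero_mul, mul_ite,
      mul_zero, Finset.sum_ite_eq', Finset.mem_univ, if_true, dotProduct, ← Finset.mul_sum]
    change s k + _ = _
    ring
  have hbb : b * b⁻¹ = 1 := mul_inv_cancel₀ hb
  have hstep : ∀ k, Ai ⬝ᵥ x k + b * (subOut γ x k + d ^ k * w)
      = fg c i (Ai i) b * (Ai ⬝ᵥ x k) + (b * s k + b * (d ^ k * w) - d * x k i) := by
    intro k
    rw [ho]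
    linear_combination ((fg c i (Ai i) b - 1) * (Ai ⬝ᵥ x k) - d * x k i) * hbb
  intro k hk
  rw [hstep]
  congr 1
  cases k with
  | zero => simp [hs0]
  | succ k =>
    rw [if_neg (Nat.succ_ne_zero k)]
    have h1 := h k (by omega)
    rw [hstep] at h1
    rw [h1, hs, pow_succ]
    linear_combination (d * fg c i (Ai i) b * (Ai ⬝ᵥ x k) - d ^ 2 * x k i) * hbb

lemma node_two (x v : ℕ → ℝ) (hx : ∀ k, x (k + 2) = 0) (hv : ∀ k, v (k + 1) = 0) :
    ∑' k, ENNReal.ofReal (x k ^ 2 + v k ^ 2) ≤ ENNReal.ofReal (x 0 ^ 2 + v 0 ^ 2 + x 1 ^ 2) := by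
  refine bellman_upper (fun k => x k ^ 2 + v k ^ 2)
    (fun k => x k ^ 2 + v k ^ 2 + x (k + 1) ^ 2) (fun k => by positivity)
    (fun k => by positivity) ?_
  intro k
  simp only [add_assoc, Nat.reduceAdd]
  rw [hx, hv]
  simp

/-- Lower bound on the cost at a node `ℓ` driven by `r * y`. -/
lemma node_lower (x v y : ℕ → ℝ) (r b : ℝ) (h : ∀ k, x (k + 1) = r * y k + b * v k) (k : ℕ) :
    ENNReal.ofReal (r ^ 2 / (1 + b ^ 2) * (y 0 ^ 2 + y (k + 1) ^ 2))
      ≤ ∑' k, ENNReal.ofReal (x k ^ 2 + v k ^ 2) := by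
  refine le_trans ?_ (ENNReal.sum_le_tsum (Finset.range (k + 3)))
  rw [← ENNReal.ofReal_sum_of_nonneg (fun i _ => by positivity)]
  apply ENNReal.ofReal_le_ofReal
  have key : ∀ t, r ^ 2 / (1 + b ^ 2) * y t ^ 2 ≤ x (t + 1) ^ 2 + v t ^ 2 := by
    intro t
    rw [h, div_mul_eq_mul_div, div_le_iff₀ (by positivity)]
    nlinarith [sq_nonneg (v t * (1 + b ^ 2) + b * (r * y t)), sq_nonneg (b * (r * y t) + b ^ 2 * v t + v t)]
  have h1 : ∑ t ∈ Finset.range (k + 2), r ^ 2 / (1 + b ^ 2) * y t ^ 2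
      ≤ ∑ t ∈ Finset.range (k + 2), (x (t + 1) ^ 2 + v t ^ 2) :=
    Finset.sum_le_sum (fun t _ => key t)
  have h2 : r ^ 2 / (1 + b ^ 2) * (y 0 ^ 2 + y (k + 1) ^ 2)
      ≤ ∑ t ∈ Finset.range (k + 2), r ^ 2 / (1 + b ^ 2) * y t ^ 2 := by
    rw [Finset.sum_range_succ, Finset.sum_range_succ']
    have : 0 ≤ ∑ t ∈ Finset.range k, r ^ 2 / (1 + b ^ 2) * y (t + 1) ^ 2 :=
      Finset.sum_nonneg (fun t _ => by positivity)
    linarith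
  have h3 : ∑ t ∈ Finset.range (k + 2), (x (t + 1) ^ 2 + v t ^ 2)
      ≤ ∑ t ∈ Finset.range (k + 3), (x t ^ 2 + v t ^ 2) := by
    rw [Finset.sum_add_distrib, Finset.sum_add_distrib, Finset.sum_range_succ' (fun t => x t ^ 2),
      Finset.sum_range_succ (fun t => v t ^ 2) (k + 2)]
    nlinarith [sq_nonneg (x 0), sq_nonneg (v (k + 2))]
  linarith

/-- If `r²/(1+β²)(x²+δ²) ≤ C + r²x²/β²` for all `r` and all large `β`, then `δ = 0`. -/
lemma delta_zero (x δ C ε : ℝ) (hε : 0 < ε)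
    (h : ∀ r β : ℝ, ε ≤ β → r ^ 2 / (1 + β ^ 2) * (x ^ 2 + δ ^ 2) ≤ C + r ^ 2 * x ^ 2 / β ^ 2) :
    δ = 0 := by
  by_contra hδ
  have hδ' : 0 < |δ| := abs_pos.2 hδ
  set β := ε + |x| / |δ| with hβ
  have hβε : ε ≤ β := by
    have : 0 ≤ |x| / |δ| := by positivity
    linarith
  have hβ0 : 0 < β := by linarith
  have h1 : |x| < β * |δ| := by
    rw [hβ, add_mul, div_mul_cancel₀ _ hδ'.ne']
    nlinarith
  have h2 : x ^ 2 < β ^ 2 * δ ^ 2 := by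
    rw [← sq_abs x, ← sq_abs δ, ← mul_pow]
    exact pow_lt_pow_left₀ h1 (abs_nonneg x) (by norm_num)
  set g := (x ^ 2 + δ ^ 2) / (1 + β ^ 2) - x ^ 2 / β ^ 2 with hg
  have hg0 : 0 < g := by
    rw [hg, sub_pos, div_lt_div_iff₀ (by positivity) (by positivity)]
    nlinarith
  have h3 := h 0 β hβε
  have hC : 0 ≤ C := by simpa using h3
  have h4 := h (Real.sqrt ((C + 1) / g)) β hβε
  have h5 : (C + 1) / g * g = C + 1 := div_mul_cancel₀ _ hg0.ne'
  rw [Real.sq_sqrt (by positivity)] at h4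
  have h6 : (C + 1) / g / (1 + β ^ 2) * (x ^ 2 + δ ^ 2) - (C + 1) / g * x ^ 2 / β ^ 2
      = (C + 1) / g * g := by
    conv_rhs => rw [hg]
    ring
  linarith

/-- On non-sink nodes a dominating strategy produces the same control law as `Γ^Θ`. -/
lemma nonsink_eq (n : ℕ) (εb : ℝ) (hεb : 0 < εb) (c : ℕ) (SP : Fin n → Fin n → Bool)
    (hsinks : ∀ i : Fin n, (∀ l : Fin n, l ≠ i → SP l i = false) ↔ n - c ≤ (i : ℕ))
    (Γ : Strat n)
    (hdom : ∀ (A B D : Matrix (Fin n) (Fin n) ℝ) (x0 w0 : Fin n → ℝ), Adm SP εb A B D →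
        Jcost (applyStrat Γ A B D) A B D x0 w0
          ≤ Jcost (applyStrat (thetaStrat n c) A B D) A B D x0 w0)
    (i : Fin n) (hi : ¬ n - c ≤ (i : ℕ)) (a : Fin n → ℝ) (b d : ℝ)
    (ha : ∀ j, SP i j = false → a j = 0) (hb : εb ≤ |b|) (k : ℕ) :
    ∀ x, subOut (Γ i a b d) x k = subOut (thetaStrat n c i a b d) x k := by
  induction k using Nat.strong_induction_on with
  | _ k ih =>
  intro y
  have hb0 : b ≠ 0 := by
    intro h; rw [h, abs_zero] at hb; linarith
  obtain ⟨l, hli, hl⟩ : ∃ l, l ≠ i ∧ SP l i = true := by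
    by_contra hcon
    push Not at hcon
    exact hi ((hsinks i).1 (fun l hl => by simpa using hcon l hl))
  set ψ := subOut (Γ i a b d) y k - subOut (thetaStrat n c i a b d) y k with hψ
  suffices hz : b * ψ = 0 by
    have : ψ = 0 := by simpa [hb0] using hz
    linarith
  have hfi : ∀ s t, fg c i s t = 0 := fun s t => by rw [fg, if_neg hi]
  have hafl : ∀ s t, a l * fg c l s t = 0 := by
    intro s t
    by_cases hls : n - c ≤ (l : ℕ)
    · rw [ha l ((hsinks l).2 hls i hli.symm), zero_mul]
    · rw [fg, if_neg hls, mul_zero]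
  refine delta_zero (y 0 i) (b * ψ) (∑ m, y 0 m ^ 2 + (a ⬝ᵥ y 0) ^ 2 / b ^ 2) εb hεb ?_
  intro r β hβ
  have hβ0 : 0 < β := by linarith
  let A : Matrix (Fin n) (Fin n) ℝ := fun m j =>
    if m = i then a j else if m = l then (if j = i then r else 0) else 0
  let bb : Fin n → ℝ := fun m => if m = i then b else if m = l then β else εb
  let dd : Fin n → ℝ := fun m => if m = i then d else 0
  let w0 : Fin n → ℝ := fun m => if m = i then d * y 0 i / b else 0
  have hAi : A i = a := by funext j; simp [A]
  have hAl : ∀ z : Fin n → ℝ, A l ⬝ᵥ z = r * z i := by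
    intro z; simp [A, hli, dotProduct]
  have hAo : ∀ m, m ≠ i → m ≠ l → ∀ z : Fin n → ℝ, A m ⬝ᵥ z = 0 := by
    intro m h1 h2 z; simp [A, h1, h2, dotProduct]
  have hAd : ∀ m, m ≠ i → A m m = 0 := by
    intro m h1; simp [A, h1]
  have hbb : ∀ m, bb m ≠ 0 := by
    intro m; simp only [bb]; split_ifs
    · exact hb0
    · exact hβ0.ne'
    · exact hεb.ne'
  have hadm : Adm SP εb A (Matrix.diagonal bb) (Matrix.diagonal dd) := by
    refine ⟨?_, Matrix.isDiag_diagonal _, ?_, Matrix.isDiag_diagonal _⟩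
    · intro m j hmj
      simp only [A]
      split_ifs with h1 h2 h3
      · subst h1; exact ha j hmj
      · subst h2 h3; rw [hl] at hmj; cases hmj
      · rfl
      · rfl
    · intro m
      rw [Matrix.diagonal_apply_eq]
      simp only [bb]; split_ifs
      · exact hb
      · rwa [abs_of_pos hβ0]
      · rw [abs_of_pos hεb]
  have hJ := hdom A (Matrix.diagonal bb) (Matrix.diagonal dd) (y 0) w0 hadm
  -- upper bound for the cost of the strategy Θ
  have hup : Jcost (applyStrat (thetaStrat n c) A (Matrix.diagonal bb) (Matrix.diagonal dd))
      A (Matrix.diagonal bb) (Matrix.diagonal dd) (y 0) w0 ≤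
      ENNReal.ofReal (∑ m, y 0 m ^ 2 + (a ⬝ᵥ y 0) ^ 2 / b ^ 2 + r ^ 2 * y 0 i ^ 2 / β ^ 2) := by
    obtain ⟨X, V, hX0, hX, hV, hcost⟩ := traj (thetaStrat n c) SP εb A _ _ hadm (y 0) w0
    simp only [Matrix.diagonal_apply_eq] at hX hV
    rw [hcost]
    have hst : ∀ m t, A m ⬝ᵥ X t + bb m * V t m = fg c m (A m m) (bb m) * (A m ⬝ᵥ X t) := by
      intro m t
      have := theta_step c m (A m) (bb m) (dd m) (w0 m) (hbb m) X t
        (fun s _ => by rw [hX, hV]) t le_rfl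
      rw [hV, this, hX0]
      have : bb m * w0 m - dd m * y 0 m = 0 := by
        by_cases hm : m = i
        · subst hm; simp only [bb, w0, dd, if_true]; field_simp; ring
        · simp [w0, dd, hm]
      simp [this]
    have hX1 : ∀ m t, X (t + 1) m = fg c m (A m m) (bb m) * (A m ⬝ᵥ X t) := by
      intro m t; rw [hX, hst]
    have hz : ∀ m t, A m ⬝ᵥ X (t + 1) = 0 := by
      intro m t
      by_cases hm : m = i
      · rw [hm, hAi, dotProduct, Finset.sum_eq_single l]
        · rw [hX1, ← mul_assoc, hafl, zero_mul]
        · intro j _ hj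
          by_cases hji : j = i
          · rw [hji, hX1, hfi, zero_mul, mul_zero]
          · rw [hX1, hAo j hji hj, mul_zero, mul_zero]
        · simp
      · by_cases hml : m = l
        · rw [hml, hAl, hX1, hfi, zero_mul, mul_zero]
        · exact hAo m hm hml _
    have hnode : ∀ m, ∑' t, ENNReal.ofReal (X t m ^ 2 + V t m ^ 2) ≤ ENNReal.ofReal
        (y 0 m ^ 2 + (A m ⬝ᵥ y 0) ^ 2 / bb m ^ 2) := by
      intro m
      refine le_trans (node_two (fun t => X t m) (fun t => V t m) ?_ ?_) ?_
      · intro t; rw [hX1, hz, mul_zero]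
      · intro t
        have := hst m (t + 1)
        rw [hz, mul_zero, zero_add] at this
        simpa [hbb m] using this
      · apply ENNReal.ofReal_le_ofReal
        have e1 := hX1 m 0
        have e2 := hst m 0
        have hfb : 0 ≤ fg c m (A m m) (bb m) ∧ fg c m (A m m) (bb m) * (1 + bb m ^ 2) ≤ 2 := by
          by_cases hm : m = i
          · rw [hm, hfi]; simp
          · rw [hAd m hm]; exact fg_bound c m _
        rw [hX0] at e1 e2
        simp only [zero_add] at e1
        set f := fg c m (A m m) (bb m)
        set z := A m ⬝ᵥ y 0
        have hv : V 0 m = (f - 1) * z / bb m := by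
          rw [eq_div_iff (hbb m)]; linarith
        rw [hX0, e1, hv]
        have hB : 0 < bb m ^ 2 := by have := hbb m; positivity
        have h5 : ((f - 1) * z / bb m) ^ 2 + (f * z) ^ 2 ≤ z ^ 2 / bb m ^ 2 := by
          rw [div_pow, div_add' _ _ _ hB.ne', div_le_div_iff_of_pos_right hB]
          have : 0 ≤ z ^ 2 * (f * (2 - f * (1 + bb m ^ 2))) := by
            have := hfb.1
            have h7 : 0 ≤ 2 - f * (1 + bb m ^ 2) := by linarith [hfb.2]
            positivity
          nlinarith
        linarith
    refine le_trans (Finset.sum_le_sum (fun m _ => hnode m)) ?_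
    rw [← ENNReal.ofReal_sum_of_nonneg (fun m _ => by positivity)]
    apply ENNReal.ofReal_le_ofReal
    rw [Finset.sum_add_distrib, add_assoc]
    gcongr
    apply le_of_eq
    have : ∀ m, (A m ⬝ᵥ y 0) ^ 2 / bb m ^ 2
        = (if m = i then (a ⬝ᵥ y 0) ^ 2 / b ^ 2 else 0)
          + (if m = l then r ^ 2 * y 0 i ^ 2 / β ^ 2 else 0) := by
      intro m
      by_cases hm : m = i
      · rw [hm, hAi]; simp [bb, Ne.symm hli]
      · by_cases hml : m = l
        · rw [hml, hAl]; simp [bb, hli, mul_pow]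
        · rw [hAo m hm hml]; simp [hm, hml]
    simp only [this]
    rw [Finset.sum_add_distrib]
    simp
  -- lower bound for the cost of Γ
  have hlow : ENNReal.ofReal (r ^ 2 / (1 + β ^ 2) * (y 0 i ^ 2 + (b * ψ) ^ 2)) ≤
      Jcost (applyStrat Γ A (Matrix.diagonal bb) (Matrix.diagonal dd))
      A (Matrix.diagonal bb) (Matrix.diagonal dd) (y 0) w0 := by
    obtain ⟨X, V, hX0, hX, hV, hcost⟩ := traj Γ SP εb A _ _ hadm (y 0) w0
    simp only [Matrix.diagonal_apply_eq] at hX hV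
    rw [hcost]
    have hbi : bb i = b := by simp [bb]
    have hdi : dd i = d := by simp [dd]
    have hwi : w0 i = d * y 0 i / b := by simp [w0]
    have hXi : X (k + 1) i = b * ψ := by
      have hst := theta_step c i a b d (d * y 0 i / b) hb0 X k (fun s hs => by
        rw [hX, hV, hAi, hbi, hdi, hwi, ih s hs]) k le_rfl
      have e1 := subOut_diff (Γ i a b d) (thetaStrat n c i a b d) k ih X y hX0
      rw [← hψ] at e1
      have e2 : b * (d * y 0 i / b) - d * X 0 i = 0 := by
        rw [hX0]; field_simp; ring
      rw [e2, ite_self, hfi] at hst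
      rw [hX, hV, hAi, hbi, hdi, hwi]
      linear_combination hst + b * e1
    have hn := node_lower (fun t => X t l) (fun t => V t l) (fun t => X t i) r β (fun t => by
      rw [hX, hAl]; simp [bb, hli]) k
    simp only [hX0, hXi] at hn
    refine le_trans hn ?_
    exact Finset.single_le_sum
      (f := fun m => ∑' t, ENNReal.ofReal (X t m ^ 2 + V t m ^ 2)) (fun _ _ => zero_le)
      (Finset.mem_univ l)
  have := hlow.trans (hJ.trans hup)
  rwa [ENNReal.ofReal_le_ofReal_iff (by positivity)] at this

lemma sum_le_forces {ι : Type*} [Fintype ι] [DecidableEq ι] (f g : ι → ℝ≥0∞)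
    (h : ∀ i, g i ≤ f i) (hg : ∀ i, g i ≠ ⊤) (hs : ∑ i, f i ≤ ∑ i, g i) (i : ι) : f i ≤ g i := by
  by_contra hlt
  push Not at hlt
  rw [← Finset.add_sum_erase _ f (Finset.mem_univ i),
    ← Finset.add_sum_erase _ g (Finset.mem_univ i)] at hs
  refine absurd hs (not_le.2 ?_)
  refine ENNReal.add_lt_add_of_lt_of_le ?_ hlt (Finset.sum_le_sum (fun j _ => h j))
  exact ENNReal.sum_ne_top.2 (fun j _ => hg j)

/-- Off-diagonal part of a row only sees the non-sink states. -/
lemma row_congr {n : ℕ} (c : ℕ) (SP : Fin n → Fin n → Bool)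
    (hsinks : ∀ i : Fin n, (∀ l : Fin n, l ≠ i → SP l i = false) ↔ n - c ≤ (i : ℕ))
    (A : Matrix (Fin n) (Fin n) ℝ) (hA : ∀ i j, SP i j = false → A i j = 0) (i : Fin n)
    (z z' : Fin n → ℝ) (h : ∀ j : Fin n, ¬ n - c ≤ (j : ℕ) → z j = z' j) :
    A i ⬝ᵥ z - A i i * z i = A i ⬝ᵥ z' - A i i * z' i := by
  have : A i ⬝ᵥ (z - z') = A i i * (z - z') i := by
    rw [dotProduct]
    refine Finset.sum_eq_single i ?_ (by simp)
    intro j _ hj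
    by_cases hjs : n - c ≤ (j : ℕ)
    · rw [hA i j ((hsinks j).2 hjs i (Ne.symm hj)), zero_mul]
    · simp [h j hjs]
  rw [dotProduct_sub, Pi.sub_apply] at this
  linarith

/-- Everything needed about the closed loop with a strategy that agrees with `Γ^Θ` on
non-sink nodes. -/
lemma nodal {n : ℕ} (εb : ℝ) (hεb : 0 < εb) (c : ℕ) (SP : Fin n → Fin n → Bool)
    (hsinks : ∀ i : Fin n, (∀ l : Fin n, l ≠ i → SP l i = false) ↔ n - c ≤ (i : ℕ))
    (Γ : Strat n)
    (A B D : Matrix (Fin n) (Fin n) ℝ) (hadm : Adm SP εb A B D) (x0 w0 : Fin n → ℝ)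
    (hns : ∀ i : Fin n, ¬ n - c ≤ (i : ℕ) → ∀ k x,
      subOut (Γ i (A i) (B i i) (D i i)) x k
        = subOut (thetaStrat n c i (A i) (B i i) (D i i)) x k) :
    ∃ X V : ℕ → Fin n → ℝ, X 0 = x0 ∧
      (∀ k i, X (k + 1) i = A i ⬝ᵥ X k + B i i * V k i) ∧
      (∀ k i, V k i = subOut (Γ i (A i) (B i i) (D i i)) X k + D i i ^ k * w0 i) ∧
      Jcost (applyStrat Γ A B D) A B D x0 w0
        = ∑ i, ∑' k, ENNReal.ofReal (X k i ^ 2 + V k i ^ 2) ∧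
      (∀ i : Fin n, ¬ n - c ≤ (i : ℕ) → ∀ k,
        X (k + 1) i = if k = 0 then B i i * w0 i - D i i * x0 i else 0) ∧
      (∀ i : Fin n, n - c ≤ (i : ℕ) → ∀ p, 0 ≤ p →
        fg c i (A i i) (B i i) * (1 + B i i ^ 2 * p) = 1 →
        p = 1 + A i i ^ 2 * p * fg c i (A i i) (B i i) →
        ENNReal.ofReal (X 0 i ^ 2 + V 0 i ^ 2 + X 1 i ^ 2
            + p * fg c i (A i i) (B i i) * (A i ⬝ᵥ X 1) ^ 2)
          ≤ ∑' k, ENNReal.ofReal (X k i ^ 2 + V k i ^ 2)) := by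
  obtain ⟨X, V, hX0, hX, hV, hcost⟩ := traj Γ SP εb A B D hadm x0 w0
  have hb : ∀ i, B i i ≠ 0 := by
    intro i h
    have := hadm.2.2.1 i
    rw [h, abs_zero] at this
    linarith
  have h5 : ∀ i : Fin n, ¬ n - c ≤ (i : ℕ) → ∀ k,
        X (k + 1) i = if k = 0 then B i i * w0 i - D i i * x0 i else 0 := by
    intro i hi k
    have := theta_step c i (A i) (B i i) (D i i) (w0 i) (hb i) X k
      (fun s _ => by rw [hX, hV, hns i hi]) k le_rfl
    rw [hX, hV, hns i hi, this, fg, if_neg hi, hX0]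
    simp
  refine ⟨X, V, hX0, hX, hV, hcost, h5, ?_⟩
  intro i hi p hp hf hd
  have := sink_lower (A i i) (B i i) p _ hp hf hd (fun k => X k i) (fun k => V k i)
    (fun k => A i ⬝ᵥ X k - A i i * X k i) (fun k => by rw [hX]; ring) (fun k => by
      have := row_congr c SP hsinks A hadm.1 i (X (k + 2)) 0 (fun j hj => by
        rw [h5 j hj]; simp)
      simpa using this)
  simpa using this

/-- Additional information for `Γ^Θ` itself. -/
lemma nodal_theta {n : ℕ} (εb : ℝ) (hεb : 0 < εb) (c : ℕ) (SP : Fin n → Fin n → Bool)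
    (hsinks : ∀ i : Fin n, (∀ l : Fin n, l ≠ i → SP l i = false) ↔ n - c ≤ (i : ℕ))
    (A B D : Matrix (Fin n) (Fin n) ℝ) (hadm : Adm SP εb A B D) (x0 w0 : Fin n → ℝ)
    (X V : ℕ → Fin n → ℝ) (hX0 : X 0 = x0)
    (hX : ∀ k i, X (k + 1) i = A i ⬝ᵥ X k + B i i * V k i)
    (hV : ∀ k i, V k i
      = subOut (thetaStrat n c i (A i) (B i i) (D i i)) X k + D i i ^ k * w0 i)
    (h5 : ∀ i : Fin n, ¬ n - c ≤ (i : ℕ) → ∀ k,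
        X (k + 1) i = if k = 0 then B i i * w0 i - D i i * x0 i else 0)
    (i : Fin n) (hi : n - c ≤ (i : ℕ)) (p : ℝ) (hp : 0 ≤ p)
    (hf : fg c i (A i i) (B i i) * (1 + B i i ^ 2 * p) = 1)
    (hd : p = 1 + A i i ^ 2 * p * fg c i (A i i) (B i i)) :
    (∑' k, ENNReal.ofReal (X k i ^ 2 + V k i ^ 2) ≤
      ENNReal.ofReal (X 0 i ^ 2 + V 0 i ^ 2 + X 1 i ^ 2
            + p * fg c i (A i i) (B i i) * (A i ⬝ᵥ X 1) ^ 2)) ∧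
    (B i i * w0 i - D i i * x0 i = 0 →
      V 0 i = -(B i i * p * fg c i (A i i) (B i i) * (A i ⬝ᵥ x0))) := by
  have hb : B i i ≠ 0 := by
    intro h
    have := hadm.2.2.1 i
    rw [h, abs_zero] at this
    linarith
  have hst : ∀ k, A i ⬝ᵥ X k + B i i * V k i = fg c i (A i i) (B i i) * (A i ⬝ᵥ X k)
      + if k = 0 then B i i * w0 i - D i i * x0 i else 0 := by
    intro k
    have := theta_step c i (A i) (B i i) (D i i) (w0 i) hb X k
      (fun s _ => by rw [hX, hV]) k le_rfl
    rw [hV, this, hX0]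
  have hVk : ∀ k, (if k = 0 then B i i * w0 i - D i i * x0 i else 0) = 0 →
      V k i = -(B i i * p * fg c i (A i i) (B i i) * (A i ⬝ᵥ X k)) := by
    intro k hk
    have h1 := hst k
    rw [hk, add_zero] at h1
    apply mul_left_cancel₀ hb
    linear_combination h1 + (A i ⬝ᵥ X k) * hf
  constructor
  · have := sink_upper (A i i) (B i i) p _ hp (fg_dare c i hi (A i i) (B i i) hb).1 hf hd
      (fun k => X k i) (fun k => V k i)
      (fun k => A i ⬝ᵥ X k - A i i * X k i) (fun k => by rw [hX]; ring) (fun k => by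
        have := row_congr c SP hsinks A hadm.1 i (X (k + 2)) 0 (fun j hj => by
          rw [h5 j hj]; simp)
        simpa using this) (fun k => by
        rw [hVk (k + 1) (by simp)]; ring)
    simpa using this
  · intro he
    rw [hVk 0 (by simpa using he), hX0]

/-- At non-sink nodes, two trajectories coincide. -/
lemma nonsink_same {n : ℕ} (c : ℕ) (SP : Fin n → Fin n → Bool)
    (hsinks : ∀ i : Fin n, (∀ l : Fin n, l ≠ i → SP l i = false) ↔ n - c ≤ (i : ℕ))
    (A B : Matrix (Fin n) (Fin n) ℝ) (hA : ∀ i j, SP i j = false → A i j = 0)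
    (hb : ∀ i, B i i ≠ 0)
    (X V X' V' : ℕ → Fin n → ℝ)
    (hX : ∀ k i, X (k + 1) i = A i ⬝ᵥ X k + B i i * V k i)
    (hX' : ∀ k i, X' (k + 1) i = A i ⬝ᵥ X' k + B i i * V' k i)
    (h : ∀ i : Fin n, ¬ n - c ≤ (i : ℕ) → ∀ k, X k i = X' k i)
    (i : Fin n) (hi : ¬ n - c ≤ (i : ℕ)) (k : ℕ) : V k i = V' k i := by
  have h1 := row_congr c SP hsinks A hA i (X k) (X' k) (fun j hj => h j hj k)
  rw [h i hi k] at h1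
  have h2 := hX k i
  rw [h i hi (k + 1), hX' k i] at h2
  apply mul_left_cancel₀ (hb i)
  linarith

/-- **Theorem 2(b) (tho:6(b)).** Let the plant graph contain no isolated node, let its sinks
be exactly the last `c ≥ 1` nodes, and let `S_K ⊇ S_P` (with self-loops). Then `Γ^Θ` is
undominated in the set `𝒞` of limited model information strategies with totally
disconnected design graph. -/
theorem theta_undominated (n : ℕ) (hn : 2 ≤ n) (εb : ℝ) (hεb : 0 < εb)
    (c : ℕ) (hc : 1 ≤ c) (hcn : c ≤ n)
    (SP SK : Fin n → Fin n → Bool)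
    (hnoiso : ∀ i : Fin n, ∃ j : Fin n, j ≠ i ∧ (SP i j = true ∨ SP j i = true))
    (hsinks : ∀ i : Fin n, (∀ l : Fin n, l ≠ i → SP l i = false) ↔ n - c ≤ (i : ℕ))
    (hsup : ∀ i j, SP i j = true → SK i j = true)
    (hself : ∀ i, SK i i = true) :
    ¬ ∃ Γ : Strat n,
      (∀ A B D : Matrix (Fin n) (Fin n) ℝ, Adm SP εb A B D →
        memK SK (applyStrat Γ A B D)) ∧
      (∀ (A B D : Matrix (Fin n) (Fin n) ℝ) (x0 w0 : Fin n → ℝ), Adm SP εb A B D →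
        Jcost (applyStrat Γ A B D) A B D x0 w0
          ≤ Jcost (applyStrat (thetaStrat n c) A B D) A B D x0 w0) ∧
      (∃ (A B D : Matrix (Fin n) (Fin n) ℝ) (x0 w0 : Fin n → ℝ), Adm SP εb A B D ∧
        Jcost (applyStrat Γ A B D) A B D x0 w0
          < Jcost (applyStrat (thetaStrat n c) A B D) A B D x0 w0) := by
  rintro ⟨Γ, -, hdom, A, B, D, x0, w0, hadm, hlt⟩
  refine absurd hlt (not_lt.2 ?_)
  have hb : ∀ i, B i i ≠ 0 := by
    intro i h
    have := hadm.2.2.1 i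
    rw [h, abs_zero] at this
    linarith
  have hns : ∀ i : Fin n, ¬ n - c ≤ (i : ℕ) → ∀ k x,
      subOut (Γ i (A i) (B i i) (D i i)) x k
        = subOut (thetaStrat n c i (A i) (B i i) (D i i)) x k := fun i hi k =>
    nonsink_eq n εb hεb c SP hsinks Γ hdom i hi (A i) (B i i) (D i i)
      (fun j hj => hadm.1 i j hj) (hadm.2.2.1 i) k
  -- Step 1: the static gains of the sink nodes agree
  have hstatic : ∀ i : Fin n, n - c ≤ (i : ℕ) → ∀ x : ℕ → Fin n → ℝ, x 0 = x0 →
      subOut (Γ i (A i) (B i i) (D i i)) x 0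
        = subOut (thetaStrat n c i (A i) (B i i) (D i i)) x 0 := by
    let w1 : Fin n → ℝ := fun m => D m m * x0 m / B m m
    have he : ∀ m, B m m * w1 m - D m m * x0 m = 0 := by
      intro m
      have := hb m
      simp only [w1]; field_simp; ring
    obtain ⟨X, V, hX0, hX, hV, hcost, h5, h6⟩ :=
      nodal εb hεb c SP hsinks Γ A B D hadm x0 w1 hns
    obtain ⟨X', V', hX0', hX', hV', hcost', h5', h6'⟩ :=
      nodal εb hεb c SP hsinks (thetaStrat n c) A B D hadm x0 w1 (fun _ _ _ _ => rfl)
    have h7' := nodal_theta εb hεb c SP hsinks A B D hadm x0 w1 X' V' hX0' hX' hV' h5'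
    have hz : ∀ j : Fin n, ¬ n - c ≤ (j : ℕ) → ∀ k, X (k + 1) j = 0 := by
      intro j hj k; rw [h5 j hj, he, ite_self]
    have hz' : ∀ j : Fin n, ¬ n - c ≤ (j : ℕ) → ∀ k, X' (k + 1) j = 0 := by
      intro j hj k; rw [h5' j hj, he, ite_self]
    have hsame : ∀ i : Fin n, ¬ n - c ≤ (i : ℕ) → ∀ k, X k i = X' k i := by
      intro i hi k
      cases k with
      | zero => rw [hX0, hX0']
      | succ k => rw [hz i hi, hz' i hi]
    have hsink : ∀ i : Fin n, n - c ≤ (i : ℕ) → ∃ p : ℝ, 0 ≤ p ∧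
        fg c i (A i i) (B i i) * (1 + B i i ^ 2 * p) = 1 ∧
        V' 0 i = -(B i i * p * fg c i (A i i) (B i i) * (A i ⬝ᵥ x0)) ∧
        0 ≤ x0 i ^ 2 + p * fg c i (A i i) (B i i) * (A i ⬝ᵥ x0) ^ 2 ∧
        ENNReal.ofReal (x0 i ^ 2 + p * fg c i (A i i) (B i i) * (A i ⬝ᵥ x0) ^ 2
          + (1 + B i i ^ 2 * p) *
            (V 0 i + B i i * p * fg c i (A i i) (B i i) * (A i ⬝ᵥ x0)) ^ 2)
          ≤ ∑' k, ENNReal.ofReal (X k i ^ 2 + V k i ^ 2) ∧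
        ∑' k, ENNReal.ofReal (X' k i ^ 2 + V' k i ^ 2) ≤
          ENNReal.ofReal (x0 i ^ 2 + p * fg c i (A i i) (B i i) * (A i ⬝ᵥ x0) ^ 2) := by
      intro i hi
      obtain ⟨hf0, p, hp, hf, hd⟩ := fg_dare c i hi (A i i) (B i i) (hb i)
      have hlow := h6 i hi p hp hf hd
      obtain ⟨hup, hv⟩ := h7' i hi p hp hf hd
      have hv := hv (he i)
      refine ⟨p, hp, hf, hv, by positivity, ?_, ?_⟩
      · convert hlow using 2
        have e1 := row_congr c SP hsinks A hadm.1 i (X 1) 0 (fun j hj => hz j hj 0)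
        simp only [dotProduct_zero, Pi.zero_apply, mul_zero, sub_zero] at e1
        have e1 : A i ⬝ᵥ X 1 = A i i * X 1 i := by linarith
        have e2 := quad_id (B i i) p _ (A i ⬝ᵥ x0) (V 0 i) hf
        have e3 := hX 0 i
        rw [hX0, zero_add] at e3
        rw [← e3] at e2
        rw [e1, hX0]
        linear_combination (-1) * e2 + X 1 i ^ 2 * hd
      · convert hup using 2
        have e1 := row_congr c SP hsinks A hadm.1 i (X' 1) 0 (fun j hj => hz' j hj 0)
        simp only [dotProduct_zero, Pi.zero_apply, mul_zero, sub_zero] at e1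
        have e1 : A i ⬝ᵥ X' 1 = A i i * X' 1 i := by linarith
        have e2 := quad_id (B i i) p _ (A i ⬝ᵥ x0) (V' 0 i) hf
        have e3 := hX' 0 i
        rw [hX0', zero_add] at e3
        have e4 : V' 0 i + B i i * p * fg c i (A i i) (B i i) * (A i ⬝ᵥ x0) = 0 := by
          rw [hv]; ring
        rw [← e3, e4] at e2
        rw [e1, hX0']
        linear_combination (-1) * e2 + X' 1 i ^ 2 * hd
    have hforce := sum_le_forces
      (fun i => ∑' k, ENNReal.ofReal (X k i ^ 2 + V k i ^ 2))
      (fun i => ∑' k, ENNReal.ofReal (X' k i ^ 2 + V' k i ^ 2))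
      (by
        intro i
        by_cases hi : n - c ≤ (i : ℕ)
        · obtain ⟨p, hp, hf, hv, h0, hl, hu⟩ := hsink i hi
          refine hu.trans (le_trans (ENNReal.ofReal_le_ofReal ?_) hl)
          have : 0 ≤ (1 + B i i ^ 2 * p) *
            (V 0 i + B i i * p * fg c i (A i i) (B i i) * (A i ⬝ᵥ x0)) ^ 2 := by positivity
          linarith
        · apply le_of_eq
          simp only [hsame i hi, nonsink_same c SP hsinks A B hadm.1 hb X V X' V' hX hX' hsame i hi])
      (by
        intro i
        by_cases hi : n - c ≤ (i : ℕ)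
        · obtain ⟨p, hp, hf, hv, h0, hl, hu⟩ := hsink i hi
          exact ne_top_of_le_ne_top ENNReal.ofReal_ne_top hu
        · refine ne_top_of_le_ne_top ENNReal.ofReal_ne_top
            (node_two (fun k => X' k i) (fun k => V' k i) (fun k => hz' i hi (k + 1)) ?_)
          intro k
          have e1 := row_congr c SP hsinks A hadm.1 i (X' (k + 1)) 0 (fun j hj => hz' j hj k)
          have e2 := hX' (k + 1) i
          rw [hz' i hi (k + 1)] at e2
          rw [hz' i hi k] at e1
          simp only [dotProduct_zero, Pi.zero_apply, mul_zero, sub_zero] at e1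
          rw [e1, zero_add] at e2
          rcases mul_eq_zero.1 e2.symm with h | h
          · exact absurd h (hb i)
          · exact h)
      (by
        rw [← hcost, ← hcost']
        exact hdom A B D x0 w1 hadm)
    intro i hi x hx
    obtain ⟨p, hp, hf, hv, h0, hl, hu⟩ := hsink i hi
    have h8 := hl.trans ((hforce i).trans hu)
    rw [ENNReal.ofReal_le_ofReal_iff h0] at h8
    have h9 : V 0 i + B i i * p * fg c i (A i i) (B i i) * (A i ⬝ᵥ x0) = 0 := by
      have h10 : 0 < 1 + B i i ^ 2 * p := by positivity
      have h11 : (V 0 i + B i i * p * fg c i (A i i) (B i i) * (A i ⬝ᵥ x0)) ^ 2 ≤ 0 := by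
        by_contra hc
        push Not at hc
        have := mul_pos h10 hc
        linarith
      exact pow_eq_zero_iff (two_ne_zero) |>.1 (le_antisymm h11 (sq_nonneg _))
    have h12 : V 0 i = V' 0 i := by rw [hv]; linarith
    rw [hV, hV'] at h12
    have hdep : ∀ (γ : SubCtrl n) (y z : ℕ → Fin n → ℝ), y 0 = z 0 →
        subOut γ y 0 = subOut γ z 0 := by
      intro γ y z h; simp [subOut, subState, h]
    rw [hdep _ x X (by rw [hx, hX0]), hdep _ x X' (by rw [hx, hX0'])]
    linarith
  -- Step 2: compare the costs
  obtain ⟨X, V, hX0, hX, hV, hcost, h5, h6⟩ :=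
    nodal εb hεb c SP hsinks Γ A B D hadm x0 w0 hns
  obtain ⟨X', V', hX0', hX', hV', hcost', h5', h6'⟩ :=
    nodal εb hεb c SP hsinks (thetaStrat n c) A B D hadm x0 w0 (fun _ _ _ _ => rfl)
  have h7' := nodal_theta εb hεb c SP hsinks A B D hadm x0 w0 X' V' hX0' hX' hV' h5'
  have hsame : ∀ i : Fin n, ¬ n - c ≤ (i : ℕ) → ∀ k, X k i = X' k i := by
    intro i hi k
    cases k with
    | zero => rw [hX0, hX0']
    | succ k => rw [h5 i hi, h5' i hi]
  have hV0 : ∀ i, V 0 i = V' 0 i := by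
    intro i
    by_cases hi : n - c ≤ (i : ℕ)
    · rw [hV, hV', hstatic i hi X hX0]
      congr 1
      simp [subOut, subState, hX0, hX0']
    · exact nonsink_same c SP hsinks A B hadm.1 hb X V X' V' hX hX' hsame i hi 0
  have hX1 : X 1 = X' 1 := by
    funext i
    have e := hX 0 i
    have e' := hX' 0 i
    rw [zero_add] at e e'
    rw [e, e', hX0, hX0', hV0]
  rw [hcost, hcost']
  refine Finset.sum_le_sum (fun i _ => ?_)
  by_cases hi : n - c ≤ (i : ℕ)
  · obtain ⟨hf0, p, hp, hf, hd⟩ := fg_dare c i hi (A i i) (B i i) (hb i)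
    refine (h7' i hi p hp hf hd).1.trans ?_
    have := h6 i hi p hp hf hd
    rwa [hX0, hV0, hX1, ← hX0'] at this
  · apply le_of_eq
    simp only [hsame i hi, nonsink_same c SP hsinks A B hadm.1 hb X V X' V' hX hX' hsame i hi]
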